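/- Let q be an odd integer ≥ 3 and r the multiplicative order of 2 modulo q. If a and b are semi-bad classes modulo q and a does not belong to C_b = {b, 2b, …, 2^{r−1}b}, then the product a·b is not a bad class, i.e. a·b ∉ E(q). -/

import Mathlib

/-! If `a * b = 2 ^ i` and `b ^ 2 = 2 ^ j`, then `2 ^ j * a = a * b ^ 2 = 2 ^ i * b`, so `a` is
a power of `2` times `b`, i.e. `a ∈ C_b`. -/

/-- The set `E(q)` of bad classes: the powers `2^i`, `0 ≤ i ≤ r - 1`, in `ℤ/qℤ`,
where `r` is the multiplicative order of `2` modulo `q`. -/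
def badE (q : ℕ) : Set (ZMod q) := {x | ∃ i < orderOf (2 : ZMod q), x = 2 ^ i}

/-- A class of `(ℤ/qℤ)*` is semi-bad if it does not belong to `E(q)` but its square does. -/
def SemiBad (q : ℕ) (x : ZMod q) : Prop := IsUnit x ∧ x ∉ badE q ∧ x ^ 2 ∈ badE q

/-- If `a` and `b` are semi-bad classes modulo `q` and `a ∉ C_b = {b, 2b, …, 2^{r−1}b}`,
then `a·b` is not a bad class. -/
theorem stmt6 (q : ℕ) (hq : 3 ≤ q) (hodd : Odd q)
    (a b : ZMod q) (ha : SemiBad q a) (hb : SemiBad q b)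
    (hab : ¬ ∃ u < orderOf (2 : ZMod q), a = 2 ^ u * b) :
    a * b ∉ badE q := by
  rintro ⟨i, hi, hi'⟩
  obtain ⟨-, -, j, hj, hj'⟩ := hb
  -- With `k + 1` the order of `2` (positive because it exceeds `i`), the inverse of `2 ^ j` is
  -- `2 ^ (k * j)`, so `a = 2 ^ (i + k * j) * b`; the exponent is then reduced modulo `k + 1`.
  obtain ⟨k, hk⟩ : ∃ k, orderOf (2 : ZMod q) = k + 1 := ⟨_, (Nat.succ_pred (by omega)).symm⟩
  have h1 : (2 : ZMod q) ^ (k + 1) = 1 := hk ▸ pow_orderOf_eq_one 2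
  refine hab ⟨(i + k * j) % orderOf (2 : ZMod q), Nat.mod_lt _ (by omega), ?_⟩
  rw [pow_mod_orderOf]
  calc a = a * ((2 : ZMod q) ^ (k + 1)) ^ j := by rw [h1, one_pow, mul_one]
    _ = 2 ^ (k * j) * a * 2 ^ j := by ring
    _ = 2 ^ (k * j) * (a * b) * b := by rw [← hj']; ring
    _ = 2 ^ (i + k * j) * b := by rw [hi']; ring
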